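/- Let I ⊆ A = K[x_1,…,x_n] be a nonzero proper monomial ideal, let J be its minimal monomial reduction ideal (the ideal generated by the monomials x^a with a ∈ ext(I)), and let ℓ = c(I) + 1 where c(I) = max{dim F : F a compact face of conv(I)} and dim F is the dimension of the affine hull of F. Then for every integer m ≥ ℓ, the integral closure of I^m satisfies \overline{I^m} = J·\overline{I^{m−1}}. -/

import Mathlib

open MvPolynomial Pointwise

attribute [local instance] Classical.propDecidable

noncomputable section

/-- The real exponent vector of a monomial exponent `a : Fin n →₀ ℕ`. -/
def expVec {n : ℕ} (a : Fin n →₀ ℕ) : Fin n → ℝ := fun i => (a i : ℝ)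

/-- The standard inner product on `ℝ^n`. -/
def dotR {n : ℕ} (u v : Fin n → ℝ) : ℝ := ∑ i, u i * v i

/-- A monomial ideal: an ideal generated by a set of monomials. -/
def IsMonomialIdeal {K : Type*} [Field K] {n : ℕ} (I : Ideal (MvPolynomial (Fin n) K)) : Prop :=
  ∃ S : Set (Fin n →₀ ℕ), I = Ideal.span ((fun a => (monomial a (1 : K))) '' S)

/-- The Newton polyhedron of an ideal: the convex hull of the exponent vectors of the
monomials belonging to the ideal. -/
def newtonPolyhedron {K : Type*} [Field K] {n : ℕ} (I : Ideal (MvPolynomial (Fin n) K)) :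
    Set (Fin n → ℝ) :=
  convexHull ℝ {v | ∃ a : Fin n →₀ ℕ, monomial a (1 : K) ∈ I ∧ v = expVec a}

/-- The hyperplane `{v : ⟨u,v⟩ = c}` is a supporting hyperplane of `C`:
`C ⊆ {v : ⟨u,v⟩ ≥ c}` and the hyperplane meets `C`. -/
def IsSupp {n : ℕ} (C : Set (Fin n → ℝ)) (u : Fin n → ℝ) (c : ℝ) : Prop :=
  (∀ v ∈ C, c ≤ dotR u v) ∧ ∃ v ∈ C, dotR u v = c

/-- `F` is a proper face of `C`: `F = S ∩ C` for some supporting hyperplane `S`, `F ≠ C`. -/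
def IsProperFace {n : ℕ} (C F : Set (Fin n → ℝ)) : Prop :=
  ∃ u c, u ≠ 0 ∧ IsSupp C u c ∧ F = {v ∈ C | dotR u v = c} ∧ F ≠ C

/-- A compact face is a proper face that is compact. -/
def IsCompactFace {n : ℕ} (C F : Set (Fin n → ℝ)) : Prop :=
  IsProperFace C F ∧ IsCompact F

/-- A maximal compact face: a compact face maximal under inclusion. -/
def IsMaxCompactFace {n : ℕ} (C F : Set (Fin n → ℝ)) : Prop :=
  IsCompactFace C F ∧ ∀ G, IsCompactFace C G → F ⊆ G → F = G

/-- The graded maximal ideal `(x_1, …, x_n)` of `K[x_1, …, x_n]`. -/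
def maxIdeal (K : Type*) [Field K] (n : ℕ) : Ideal (MvPolynomial (Fin n) K) :=
  Ideal.span (Set.range fun i => (X i : MvPolynomial (Fin n) K))

/-- `f` is a minimal generator of the monomial ideal `L` if `f ∈ L` and `f ∉ (x_1,…,x_n)·L`. -/
def IsMinGen {K : Type*} [Field K] {n : ℕ} (L : Ideal (MvPolynomial (Fin n) K))
    (f : MvPolynomial (Fin n) K) : Prop :=
  f ∈ L ∧ f ∉ maxIdeal K n * L

/-- `L` is a reduction ideal of `I`: `L ⊆ I` and `L·I^{m-1} = I^m` for some `m ≥ 1`. -/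
def IsReduction {K : Type*} [Field K] {n : ℕ} (L I : Ideal (MvPolynomial (Fin n) K)) : Prop :=
  L ≤ I ∧ ∃ m : ℕ, 1 ≤ m ∧ L * I ^ (m - 1) = I ^ m

/-- `c(I)`: the maximum of the dimensions (of affine hulls) of the compact faces of the
Newton polyhedron of `I`. -/
def maxCompactFaceDim {K : Type*} [Field K] {n : ℕ} (I : Ideal (MvPolynomial (Fin n) K)) : ℕ :=
  sSup {d : ℕ | ∃ F, IsCompactFace (newtonPolyhedron I) F ∧
    d = Module.finrank ℝ (affineSpan ℝ F).direction}

/-- The integral closure of a monomial ideal: the ideal generated by the monomials whose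
exponent vectors lie in the Newton polyhedron. -/
def intCl {K : Type*} [Field K] {n : ℕ} (L : Ideal (MvPolynomial (Fin n) K)) :
    Ideal (MvPolynomial (Fin n) K) :=
  Ideal.span {f | ∃ b : Fin n →₀ ℕ, expVec b ∈ newtonPolyhedron L ∧ f = monomial b (1 : K)}

/-!
Let `x ^ b` lie in the integral closure of `I ^ m`, so that `b` dominates `m • q` for some `q` in
the Newton polyhedron `C` of `I`. Maximising the volume of a box between `q + ε` and a point of `C`
yields a point of `C` below `q + ε` that minimises a functional with strictly positive
coefficients. Such a functional exposes a compact face, and there are only finitely many compact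
faces, so in the limit `ε → 0` some compact face contains a point `p ≤ q`. By Carathéodory, `p` is a
convex combination of at most `ℓ ≤ m` extreme points of that face, hence one of them, `a`, has
weight at least `1 / m`. Subtracting it leaves `m • p - a ∈ (m - 1) • C`, so `x ^ b` is the product
of the generator `x ^ a` of `J` and a monomial in the integral closure of `I ^ (m - 1)`.
-/

lemma add_Ici_zero_eq_upperClosure {E : Type*} [AddCommGroup E] [PartialOrder E]
    [IsOrderedAddMonoid E] (s : Set E) : s + Set.Ici (0 : E) = ↑(upperClosure s) := by
  rw [← UpperSet.coe_zero, ← upperClosure_zero, add_upperClosure, add_zero]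

section Convexity

variable {𝕜 E : Type*} [Field 𝕜] [LinearOrder 𝕜] [IsStrictOrderedRing 𝕜] [AddCommGroup E]
  [Module 𝕜 E]

lemma exists_mem_smul_eq_sum {ι : Type*} {C : Set E} (hC : Convex 𝕜 C) (hne : C.Nonempty)
    {s : Finset ι} {w : ι → 𝕜} {z : ι → E} (hw : ∀ i ∈ s, 0 ≤ w i) (hz : ∀ i ∈ s, z i ∈ C) :
    ∃ y ∈ C, (∑ i ∈ s, w i) • y = ∑ i ∈ s, w i • z i := by
  induction s using Finset.cons_induction with
  | empty => exact ⟨hne.some, hne.some_mem, by simp⟩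
  | cons i s hi ih =>
    simp only [Finset.forall_mem_cons] at hw hz
    obtain ⟨y, hy, hys⟩ := ih hw.2 hz.2
    simp only [Finset.sum_cons, ← hys]
    exact hC.exists_mem_add_smul_eq hz.1 hy hw.1 (Finset.sum_nonneg hw.2)

lemma exists_smul_eq_add_of_mem_convexHull [FiniteDimensional 𝕜 E] {s : Set E} {x : E}
    (hx : x ∈ convexHull 𝕜 s) {t : 𝕜} (ht : (Module.finrank 𝕜 (vectorSpan 𝕜 s) : 𝕜) + 1 ≤ t) :
    ∃ v ∈ s, ∃ y ∈ convexHull 𝕜 s, t • x = v + (t - 1) • y := by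
  obtain ⟨ι, _, z, w, hzs, hz, hw, hw_sum, rfl⟩ := eq_pos_convex_span_of_mem_convexHull hx
  have hne : Nonempty ι := by
    by_contra h
    simp [not_nonempty_iff.1 h] at hw_sum
  have hcard : (Fintype.card ι : 𝕜) ≤ t := by
    refine le_trans ?_ ht
    exact_mod_cast hz.card_le_finrank_succ.trans
      (Nat.succ_le_succ (Submodule.finrank_mono (vectorSpan_mono 𝕜 hzs)))
  obtain ⟨j, -, hj⟩ : ∃ j ∈ Finset.univ, 1 ≤ t * w j := by
    refine Finset.exists_le_of_sum_le Finset.univ_nonempty ?_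
    simpa [← Finset.mul_sum, hw_sum] using hcard
  have hμ (i : ι) : 0 ≤ t * w i - (if i = j then 1 else 0) := by
    split_ifs with h
    · simpa [h] using hj
    · simpa using mul_nonneg ((Nat.cast_nonneg _).trans hcard) (hw i).le
  obtain ⟨y, hy, hsum⟩ := exists_mem_smul_eq_sum (s := Finset.univ)
    (convex_convexHull 𝕜 s) ⟨_, hx⟩ (fun i _ => hμ i)
    (fun i _ => subset_convexHull 𝕜 s (hzs ⟨i, rfl⟩))
  refine ⟨z j, hzs ⟨j, rfl⟩, y, hy, ?_⟩
  simp only [Finset.sum_sub_distrib, sub_smul, ← Finset.mul_sum, hw_sum, mul_smul,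
    ← Finset.smul_sum, ite_smul, one_smul, zero_smul, Finset.sum_ite_eq', Finset.mem_univ,
    if_true, mul_one] at hsum
  rw [sub_smul, one_smul, hsum, add_sub_cancel]

variable [PartialOrder E] [IsOrderedAddMonoid E]

lemma eq_of_le_of_mem_extremePoints {C : Set E} (hC : IsUpperSet C) {x y : E}
    (hx : x ∈ C.extremePoints 𝕜) (hy : y ∈ C) (hyx : y ≤ x) : y = x := by
  have hz : x + (x - y) ∈ C := hC (le_add_of_nonneg_right (sub_nonneg.2 hyx)) hx.1
  have hmid : x ∈ openSegment 𝕜 y (x + (x - y)) :=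
    ⟨2⁻¹, 2⁻¹, by positivity, by positivity, by norm_num, by module⟩
  exact hx.2 hy hz hmid

lemma extremePoints_upperClosure_convexHull_subset (s : Set E) :
    (upperClosure (convexHull 𝕜 s) : Set E).extremePoints 𝕜 ⊆ s := by
  intro x hx
  obtain ⟨y, hy, hyx⟩ := mem_upperClosure.1 hx.1
  obtain rfl := eq_of_le_of_mem_extremePoints
    (upperClosure (convexHull 𝕜 s)).upper hx (subset_upperClosure hy) hyx
  exact extremePoints_convexHull_subset
    (inter_extremePoints_subset_extremePoints_of_subset subset_upperClosure ⟨hy, hx⟩)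

end Convexity

section KreinMilman

variable {E : Type*} [AddCommGroup E] [Module ℝ E] [TopologicalSpace E] [T2Space E]
  [IsTopologicalAddGroup E] [ContinuousSMul ℝ E] [LocallyConvexSpace ℝ E]

lemma convexHull_extremePoints_of_finite {F : Set E} (hcomp : IsCompact F) (hconv : Convex ℝ F)
    (hfin : (F.extremePoints ℝ).Finite) : convexHull ℝ (F.extremePoints ℝ) = F := by
  rw [← (hfin.isClosed_convexHull (𝕜 := ℝ)).closure_eq,
    closure_convexHull_extremePoints hcomp hconv]

lemma finite_setOf_isExtreme_isCompact_convex {C : Set E} (hC : (C.extremePoints ℝ).Finite) :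
    {F | IsExtreme ℝ C F ∧ IsCompact F ∧ Convex ℝ F}.Finite := by
  refine Set.Finite.of_finite_image (f := Set.extremePoints ℝ) (hC.finite_subsets.subset ?_) ?_
  · rintro _ ⟨F, hF, rfl⟩
    exact hF.1.extremePoints_subset_extremePoints
  · intro F hF G hG hFG
    rw [← closure_convexHull_extremePoints hF.2.1 hF.2.2,
      ← closure_convexHull_extremePoints hG.2.1 hG.2.2, hFG]

end KreinMilman

section MinFace

variable {ι : Type*} [Fintype ι] {C : Set (ι → ℝ)} {u p q : ι → ℝ}

/-- The face of `C` exposed by `u`: the points of `C` at which the functional `⟨u, ·⟩` is minimal.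
It is empty if the minimum over `C` is not attained. -/
def minFace (u : ι → ℝ) (C : Set (ι → ℝ)) : Set (ι → ℝ) :=
  {x ∈ C | ∀ y ∈ C, u ⬝ᵥ x ≤ u ⬝ᵥ y}

lemma isExposed_minFace (u : ι → ℝ) (C : Set (ι → ℝ)) : IsExposed ℝ C (minFace u C) :=
  fun _ => ⟨-∑ i, u i • ContinuousLinearMap.proj i, by simp [minFace, dotProduct]⟩

lemma minFace_eq_of_mem (hp : p ∈ minFace u C) : minFace u C = {x ∈ C | u ⬝ᵥ x = u ⬝ᵥ p} := by
  ext x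
  exact ⟨fun hx => ⟨hx.1, (hx.2 p hp.1).antisymm (hp.2 x hx.1)⟩,
    fun hx => ⟨hx.1, fun y hy => hx.2.trans_le (hp.2 y hy)⟩⟩

lemma bddAbove_minFace (hC : BddBelow C) (hu : ∀ i, 0 < u i) : BddAbove (minFace u C) := by
  obtain ⟨b, hb⟩ := hC
  rcases (minFace u C).eq_empty_or_nonempty with h | ⟨p, hp⟩
  · simp [h]
  refine ⟨fun i => b i + u ⬝ᵥ (p - b) / u i, fun x hx i => ?_⟩
  have hcoord : u i * (x i - b i) ≤ u ⬝ᵥ (x - b) :=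
    Finset.single_le_sum (f := fun i => u i * (x - b) i)
      (fun j _ => mul_nonneg (hu j).le (sub_nonneg.2 (hb hx.1 j))) (Finset.mem_univ i)
  have hxp : u ⬝ᵥ (x - b) ≤ u ⬝ᵥ (p - b) := by
    simpa only [dotProduct_sub, sub_le_sub_iff_right] using hx.2 p hp.1
  rw [← sub_le_iff_le_add', le_div_iff₀' (hu i)]
  exact hcoord.trans hxp

lemma isCompact_minFace (hC : IsClosed C) (hbdd : BddBelow C) (hu : ∀ i, 0 < u i) :
    IsCompact (minFace u C) := by
  obtain ⟨b, hb⟩ := hbdd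
  obtain ⟨B, hB⟩ := bddAbove_minFace ⟨b, hb⟩ hu
  exact isCompact_Icc.of_isClosed_subset ((isExposed_minFace u C).isClosed hC)
    fun x hx => ⟨hb hx.1, hB hx⟩

-- The witness maximises the volume `∏ i, (q i + ε - x i)` of the box between `x` and `q + ε`;
-- the logarithmic gradient of that volume is a strictly negative normal vector.
lemma exists_mem_minFace_le_add (hC : IsClosed C) (hconv : Convex ℝ C) (hbdd : BddBelow C)
    (hq : q ∈ C) {ε : ℝ} (hε : 0 < ε) :
    ∃ u : ι → ℝ, (∀ i, 0 < u i) ∧ ∃ p ∈ minFace u C, p ≤ q + fun _ => ε := by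
  obtain ⟨b, hb⟩ := hbdd
  set r : ι → ℝ := q + fun _ => ε
  have hqr (i : ι) : q i < r i := lt_add_of_pos_right _ hε
  obtain ⟨p, ⟨hpC, -, hpr⟩, hmax⟩ := (isCompact_Icc (a := b) (b := r)).inter_left hC
    |>.exists_isMaxOn ⟨q, hq, hb hq, fun i => (hqr i).le⟩
      (f := fun x => ∏ i, (r i - x i)) (by fun_prop)
  have hprod : 0 < ∏ i, (r i - p i) :=
    (Finset.prod_pos fun i _ => sub_pos.2 (hqr i)).trans_le
      (hmax ⟨hq, hb hq, fun i => (hqr i).le⟩)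
  have hpos (i : ι) : 0 < r i - p i :=
    (sub_nonneg.2 (hpr i)).lt_of_ne' (Finset.prod_ne_zero_iff.1 hprod.ne' i (Finset.mem_univ i))
  have hlocal : IsLocalMaxOn (fun x => ∏ i, (r i - x i)) C p := by
    have hbelow : ∀ᶠ x in nhdsWithin p C, ∀ i, x i < r i :=
      Filter.eventually_all.2 fun i => nhdsWithin_le_nhds
        ((continuous_apply i).continuousAt.eventually_lt_const (sub_pos.1 (hpos i)))
    filter_upwards [hbelow, self_mem_nhdsWithin] with x hx hxC
    exact hmax ⟨hxC, hb hxC, fun i => (hx i).le⟩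
  set u : ι → ℝ := fun i => ∏ j ∈ Finset.univ.erase i, (r j - p j)
  have hderiv : HasFDerivWithinAt (fun x : ι → ℝ => ∏ i, (r i - x i))
      (∑ i, u i • -(ContinuousLinearMap.proj i : (ι → ℝ) →L[ℝ] ℝ)) C p :=
    HasFDerivWithinAt.finsetProd fun i _ => ((hasFDerivAt_apply i p).const_sub _).hasFDerivWithinAt
  refine ⟨u, fun i => Finset.prod_pos fun j _ => hpos j, p, ⟨hpC, fun y hy => ?_⟩, hpr⟩
  have := hlocal.hasFDerivWithinAt_nonpos hderiv
    (sub_mem_posTangentConeAt_of_segment_subset (hconv.segment_subset hpC hy))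
  rw [← sub_nonneg, ← dotProduct_sub]
  simpa [dotProduct] using this

lemma exists_mem_minFace_le (hC : IsClosed C) (hconv : Convex ℝ C) (hbdd : BddBelow C)
    (hext : (C.extremePoints ℝ).Finite) (hq : q ∈ C) :
    ∃ u : ι → ℝ, (∀ i, 0 < u i) ∧ ∃ p ∈ minFace u C, p ≤ q := by
  set 𝓕 : Set (Set (ι → ℝ)) := {F | ∃ u : ι → ℝ, (∀ i, 0 < u i) ∧ F = minFace u C}
  have hfin : 𝓕.Finite := (finite_setOf_isExtreme_isCompact_convex hext).subset <| by
    rintro _ ⟨u, hu, rfl⟩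
    exact ⟨(isExposed_minFace u C).isExtreme, isCompact_minFace hC hbdd hu,
      (isExposed_minFace u C).convex hconv⟩
  have hcomp : IsCompact (⋃₀ 𝓕) := hfin.isCompact_sUnion <| by
    rintro _ ⟨u, hu, rfl⟩
    exact isCompact_minFace hC hbdd hu
  have hsub : ⋃₀ 𝓕 ⊆ C := Set.sUnion_subset <| by
    rintro _ ⟨u, -, rfl⟩
    exact (isExposed_minFace u C).subset
  have hclosed : IsClosed (upperClosure (⋃₀ 𝓕) : Set (ι → ℝ)) :=
    hcomp.isClosed.upperClosure_pi (hbdd.mono hsub)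
  have hlim : Filter.Tendsto (fun ε : ℝ => q + fun _ => ε) (nhdsWithin 0 (Set.Ioi 0)) (nhds q) := by
    have : Continuous fun ε : ℝ => q + fun _ => ε := by fun_prop
    exact (this.tendsto' 0 q (add_zero q)).mono_left nhdsWithin_le_nhds
  have hmem : q ∈ (upperClosure (⋃₀ 𝓕) : Set (ι → ℝ)) := by
    refine hclosed.mem_of_tendsto hlim ?_
    filter_upwards [self_mem_nhdsWithin] with ε hε
    obtain ⟨u, hu, p, hp, hpq⟩ := exists_mem_minFace_le_add hC hconv hbdd hq hε
    exact ⟨p, ⟨_, ⟨u, hu, rfl⟩, hp⟩, hpq⟩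
  obtain ⟨p, ⟨_, ⟨u, hu, rfl⟩, hp⟩, hpq⟩ := mem_upperClosure.1 hmem
  exact ⟨u, hu, p, hp, hpq⟩

end MinFace

section NewtonPolyhedron

variable {K : Type*} [Field K] {n : ℕ} {I L : Ideal (MvPolynomial (Fin n) K)}

lemma expVec_add (a b : Fin n →₀ ℕ) : expVec (a + b) = expVec a + expVec b := by
  ext i; simp [expVec]

lemma expVec_le_expVec {a b : Fin n →₀ ℕ} : expVec a ≤ expVec b ↔ a ≤ b := by
  simp [Pi.le_def, Finsupp.le_def, expVec]

lemma expVec_nonneg (a : Fin n →₀ ℕ) : 0 ≤ expVec a := fun i => Nat.cast_nonneg (a i)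

lemma image_expVec_add (s t : Set (Fin n →₀ ℕ)) :
    expVec '' (s + t) = expVec '' s + expVec '' t :=
  Set.image_image2_distrib expVec_add

lemma convexHull_range_natCast : convexHull ℝ (Set.range ((↑) : ℕ → ℝ)) = Set.Ici 0 := by
  refine (convexHull_min ?_ (convex_Ici 0)).antisymm fun x hx => ?_
  · rintro _ ⟨k, rfl⟩
    exact Set.mem_Ici.2 k.cast_nonneg
  · obtain ⟨k, hk⟩ := exists_nat_ge x
    have hmem (j : ℕ) := subset_convexHull ℝ _ (Set.mem_range_self (f := ((↑) : ℕ → ℝ)) j)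
    exact (convex_convexHull ℝ _).ordConnected.out (hmem 0) (hmem k) ⟨by simpa using hx, hk⟩

lemma range_expVec :
    Set.range (expVec (n := n)) = Set.univ.pi fun _ => Set.range ((↑) : ℕ → ℝ) := by
  ext v
  simp only [Set.mem_range, Set.mem_univ_pi]
  refine ⟨fun ⟨a, ha⟩ i => ⟨a i, congrFun ha i⟩, fun hv => ?_⟩
  choose a ha using hv
  exact ⟨Finsupp.equivFunOnFinite.symm a, funext ha⟩

lemma convexHull_range_expVec : convexHull ℝ (Set.range (expVec (n := n))) = Set.Ici 0 := by
  rw [range_expVec, convexHull_pi]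
  simp only [convexHull_range_natCast]
  exact Set.pi_univ_Ici 0

/-- The set `Γ(I)` of exponents of the monomials in the ideal `I`. -/
def exponentSet (I : Ideal (MvPolynomial (Fin n) K)) : Set (Fin n →₀ ℕ) :=
  {a | monomial a (1 : K) ∈ I}

lemma isUpperSet_exponentSet (I : Ideal (MvPolynomial (Fin n) K)) :
    IsUpperSet (exponentSet I) := by
  intro a b hab ha
  obtain ⟨d, rfl⟩ := le_iff_exists_add.1 hab
  simpa [exponentSet, monomial_mul] using I.mul_mem_right (monomial d 1) ha

lemma exponentSet_one : exponentSet (1 : Ideal (MvPolynomial (Fin n) K)) = Set.univ := by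
  simp [exponentSet]

lemma exponentSet_span (s : Set (Fin n →₀ ℕ)) :
    exponentSet (Ideal.span ((fun a => monomial a (1 : K)) '' s)) = upperClosure s := by
  ext a
  simp [exponentSet, mem_ideal_span_monomial_image, support_monomial]

lemma span_image_monomial_mul (s t : Set (Fin n →₀ ℕ)) :
    Ideal.span ((fun a => monomial a (1 : K)) '' s) *
        Ideal.span ((fun a => monomial a (1 : K)) '' t) =
      Ideal.span ((fun a => monomial a (1 : K)) '' (s + t)) := by
  rw [Ideal.span_mul_span']
  exact congrArg Ideal.span (Set.image_image2_distrib fun a b => by simp [monomial_mul]).symm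

lemma isMonomialIdeal_mul (hI : IsMonomialIdeal I) (hL : IsMonomialIdeal L) :
    IsMonomialIdeal (I * L) := by
  obtain ⟨s, rfl⟩ := hI
  obtain ⟨t, rfl⟩ := hL
  exact ⟨s + t, span_image_monomial_mul s t⟩

lemma isMonomialIdeal_pow (hI : IsMonomialIdeal I) (k : ℕ) : IsMonomialIdeal (I ^ k) := by
  induction k with
  | zero => exact ⟨{0}, by simp [Ideal.one_eq_top]⟩
  | succ k ih => exact pow_succ I k ▸ isMonomialIdeal_mul ih hI

lemma exponentSet_mul (hI : IsMonomialIdeal I) (hL : IsMonomialIdeal L) :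
    exponentSet (I * L) = exponentSet I + exponentSet L := by
  obtain ⟨s, rfl⟩ := hI
  obtain ⟨t, rfl⟩ := hL
  simp only [span_image_monomial_mul, exponentSet_span]
  ext a
  simp only [SetLike.mem_coe, mem_upperClosure, Set.mem_add]
  constructor
  · rintro ⟨_, ⟨b, hb, c, hc, rfl⟩, hle⟩
    obtain ⟨d, rfl⟩ := le_iff_exists_add.1 hle
    exact ⟨b, ⟨b, hb, le_rfl⟩, c + d, ⟨c, hc, le_self_add⟩, (add_assoc b c d).symm⟩
  · rintro ⟨b, ⟨b', hb', hb⟩, c, ⟨c', hc', hc⟩, rfl⟩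
    exact ⟨b' + c', ⟨b', hb', c', hc', rfl⟩, add_le_add hb hc⟩

lemma newtonPolyhedron_eq (I : Ideal (MvPolynomial (Fin n) K)) :
    newtonPolyhedron I = convexHull ℝ (expVec '' exponentSet I) := by
  simp only [newtonPolyhedron, exponentSet, Set.image, Set.mem_ofPred_eq, eq_comm]

lemma convex_newtonPolyhedron (I : Ideal (MvPolynomial (Fin n) K)) :
    Convex ℝ (newtonPolyhedron I) :=
  convex_convexHull ℝ _

lemma newtonPolyhedron_one :
    newtonPolyhedron (1 : Ideal (MvPolynomial (Fin n) K)) = Set.Ici 0 := by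
  rw [newtonPolyhedron_eq, exponentSet_one, Set.image_univ, convexHull_range_expVec]

lemma newtonPolyhedron_nonempty (hI : IsMonomialIdeal I) (hne : I ≠ ⊥) :
    (newtonPolyhedron I).Nonempty := by
  obtain ⟨s, rfl⟩ := hI
  obtain ⟨a, ha⟩ : s.Nonempty := by
    by_contra h
    simp [Set.not_nonempty_iff_eq_empty.1 h] at hne
  exact ⟨expVec a, subset_convexHull ℝ _ ⟨a, Ideal.subset_span ⟨a, ha, rfl⟩, rfl⟩⟩

lemma newtonPolyhedron_subset_Ici (I : Ideal (MvPolynomial (Fin n) K)) :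
    newtonPolyhedron I ⊆ Set.Ici 0 := by
  refine convexHull_min ?_ (convex_Ici 0)
  rintro _ ⟨a, -, rfl⟩
  exact expVec_nonneg a

lemma newtonPolyhedron_mul (hI : IsMonomialIdeal I) (hL : IsMonomialIdeal L) :
    newtonPolyhedron (I * L) = newtonPolyhedron I + newtonPolyhedron L := by
  simp only [newtonPolyhedron_eq, exponentSet_mul hI hL, image_expVec_add, convexHull_add]

lemma exists_finite_exponentSet_eq (I : Ideal (MvPolynomial (Fin n) K)) :
    ∃ s : Set (Fin n →₀ ℕ), s.Finite ∧ exponentSet I = s + Set.univ := by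
  refine ⟨{a | Minimal (· ∈ exponentSet I) a},
    WellQuasiOrderedLE.finite_of_isAntichain (setOfPred_minimal_antichain _),
    Set.Subset.antisymm (fun a ha => ?_) ?_⟩
  · obtain ⟨b, hba, hb⟩ := exists_minimal_le_of_wellFoundedLT (· ∈ exponentSet I) a ha
    exact ⟨b, hb, a - b, Set.mem_univ _, add_tsub_cancel_of_le hba⟩
  · rintro _ ⟨b, hb, d, -, rfl⟩
    exact isUpperSet_exponentSet I le_self_add hb.prop

lemma exists_finite_newtonPolyhedron_eq (I : Ideal (MvPolynomial (Fin n) K)) :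
    ∃ s : Set (Fin n → ℝ), s.Finite ∧ newtonPolyhedron I = upperClosure (convexHull ℝ s) := by
  obtain ⟨s, hs, hIs⟩ := exists_finite_exponentSet_eq I
  refine ⟨expVec '' s, hs.image _, ?_⟩
  rw [newtonPolyhedron_eq, hIs, image_expVec_add, convexHull_add, Set.image_univ,
    convexHull_range_expVec, add_Ici_zero_eq_upperClosure]

lemma isUpperSet_newtonPolyhedron (I : Ideal (MvPolynomial (Fin n) K)) :
    IsUpperSet (newtonPolyhedron I) := by
  obtain ⟨s, -, hs⟩ := exists_finite_newtonPolyhedron_eq I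
  exact hs ▸ (upperClosure _).upper

lemma bddBelow_newtonPolyhedron (I : Ideal (MvPolynomial (Fin n) K)) :
    BddBelow (newtonPolyhedron I) :=
  ⟨0, newtonPolyhedron_subset_Ici I⟩

lemma isClosed_newtonPolyhedron (I : Ideal (MvPolynomial (Fin n) K)) :
    IsClosed (newtonPolyhedron I) := by
  obtain ⟨s, hfin, hs⟩ := exists_finite_newtonPolyhedron_eq I
  have hsub : convexHull ℝ s ⊆ newtonPolyhedron I := hs ▸ subset_upperClosure
  rw [hs]
  exact (hfin.isClosed_convexHull (𝕜 := ℝ)).upperClosure_pi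
    ((bddBelow_newtonPolyhedron I).mono hsub)

lemma finite_extremePoints_newtonPolyhedron (I : Ideal (MvPolynomial (Fin n) K)) :
    ((newtonPolyhedron I).extremePoints ℝ).Finite := by
  obtain ⟨s, hfin, hs⟩ := exists_finite_newtonPolyhedron_eq I
  exact hfin.subset (hs ▸ extremePoints_upperClosure_convexHull_subset s)

lemma newtonPolyhedron_pow (hI : IsMonomialIdeal I) (hne : (newtonPolyhedron I).Nonempty)
    (k : ℕ) : newtonPolyhedron (I ^ k) = upperClosure ((k : ℝ) • newtonPolyhedron I) := by
  induction k with
  | zero =>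
    rw [pow_zero, newtonPolyhedron_one, Nat.cast_zero, Set.zero_smul_set hne, upperClosure_zero,
      UpperSet.coe_zero]
  | succ k ih =>
    rw [pow_succ, newtonPolyhedron_mul (isMonomialIdeal_pow hI k) hI, ih, upperClosure_add,
      Nat.cast_succ, (convex_newtonPolyhedron I).add_smul k.cast_nonneg zero_le_one, one_smul]

lemma mem_newtonPolyhedron_pow_iff (hI : IsMonomialIdeal I) (hne : (newtonPolyhedron I).Nonempty)
    {k : ℕ} {x : Fin n → ℝ} :
    x ∈ newtonPolyhedron (I ^ k) ↔ ∃ y ∈ newtonPolyhedron I, (k : ℝ) • y ≤ x := by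
  simp [newtonPolyhedron_pow hI hne, Set.mem_smul_set]

lemma isCompactFace_minFace [NeZero n] {u p : Fin n → ℝ} (hu : ∀ i, 0 < u i)
    (hp : p ∈ minFace u (newtonPolyhedron I)) :
    IsCompactFace (newtonPolyhedron I) (minFace u (newtonPolyhedron I)) := by
  have hpos : 0 < u ⬝ᵥ u :=
    Finset.sum_pos (fun i _ => mul_pos (hu i) (hu i)) Finset.univ_nonempty
  refine ⟨⟨u, u ⬝ᵥ p, fun h => (hu 0).ne' (congrFun h 0), ⟨hp.2, p, hp.1, rfl⟩,
    minFace_eq_of_mem hp, fun h => ?_⟩,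
    isCompact_minFace (isClosed_newtonPolyhedron I) (bddBelow_newtonPolyhedron I) hu⟩
  have hpu : p + u ∈ newtonPolyhedron I :=
    isUpperSet_newtonPolyhedron I (le_add_of_nonneg_right fun i => (hu i).le) hp.1
  rw [← h] at hpu
  have := hpu.2 p hp.1
  rw [dotProduct_add] at this
  linarith

lemma finrank_minFace_le_maxCompactFaceDim {u p : Fin n → ℝ} (hu : ∀ i, 0 < u i)
    (hp : p ∈ minFace u (newtonPolyhedron I)) :
    Module.finrank ℝ (vectorSpan ℝ (minFace u (newtonPolyhedron I))) ≤ maxCompactFaceDim I := by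
  rcases n.eq_zero_or_pos with rfl | hn
  · simp [Module.finrank_zero_of_subsingleton]
  have : NeZero n := ⟨hn.ne'⟩
  refine le_csSup ⟨n, ?_⟩ ⟨_, isCompactFace_minFace hu hp, by rw [direction_affineSpan]⟩
  rintro _ ⟨F, -, rfl⟩
  simpa using (affineSpan ℝ F).direction.finrank_le

lemma exists_expVec_add_smul_le {q : Fin n → ℝ} (hq : q ∈ newtonPolyhedron I) {t : ℝ}
    (ht : (maxCompactFaceDim I : ℝ) + 1 ≤ t) :
    ∃ a : Fin n →₀ ℕ, expVec a ∈ (newtonPolyhedron I).extremePoints ℝ ∧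
      ∃ y ∈ newtonPolyhedron I, expVec a + (t - 1) • y ≤ t • q := by
  have hconv := convex_newtonPolyhedron I
  have hclosed := isClosed_newtonPolyhedron I
  have hbdd := bddBelow_newtonPolyhedron I
  have hfin := finite_extremePoints_newtonPolyhedron I
  obtain ⟨u, hu, p, hp, hpq⟩ := exists_mem_minFace_le hclosed hconv hbdd hfin hq
  set F := minFace u (newtonPolyhedron I)
  have hF : IsExposed ℝ (newtonPolyhedron I) F := isExposed_minFace u _
  have hext := hF.isExtreme.extremePoints_subset_extremePoints
  have hhull : convexHull ℝ (F.extremePoints ℝ) = F :=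
    convexHull_extremePoints_of_finite (isCompact_minFace hclosed hbdd hu) (hF.convex hconv)
      (hfin.subset hext)
  have hdim : Module.finrank ℝ (vectorSpan ℝ (F.extremePoints ℝ)) ≤ maxCompactFaceDim I :=
    (Submodule.finrank_mono (vectorSpan_mono ℝ extremePoints_subset)).trans
      (finrank_minFace_le_maxCompactFaceDim hu hp)
  obtain ⟨v, hv, y, hy, hpy⟩ := exists_smul_eq_add_of_mem_convexHull (hhull.symm ▸ hp)
    ((add_le_add_left (Nat.cast_le.2 hdim) 1).trans ht)
  obtain ⟨a, -, rfl⟩ := extremePoints_convexHull_subset (hext hv)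
  have ht0 : 0 ≤ t := le_trans (by positivity) ht
  exact ⟨a, hext hv, y, hF.subset (hhull ▸ hy), hpy ▸ smul_le_smul_of_nonneg_left hpq ht0⟩

lemma exists_add_eq_of_mem_newtonPolyhedron_pow (hI : IsMonomialIdeal I)
    (hne : (newtonPolyhedron I).Nonempty) {k : ℕ} (hk : maxCompactFaceDim I ≤ k)
    {b : Fin n →₀ ℕ} (hb : expVec b ∈ newtonPolyhedron (I ^ (k + 1))) :
    ∃ a d : Fin n →₀ ℕ, expVec a ∈ (newtonPolyhedron I).extremePoints ℝ ∧
      expVec d ∈ newtonPolyhedron (I ^ k) ∧ a + d = b := by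
  obtain ⟨q, hq, hqb⟩ := (mem_newtonPolyhedron_pow_iff hI hne).1 hb
  obtain ⟨a, ha, y, hy, hay⟩ := exists_expVec_add_smul_le hq (t := (k + 1 : ℕ))
    (by exact_mod_cast Nat.succ_le_succ hk)
  rw [Nat.cast_succ, add_sub_cancel_right, ← Nat.cast_succ] at hay
  have hle : expVec a + (k : ℝ) • y ≤ expVec b := hay.trans hqb
  have hab : a ≤ b := expVec_le_expVec.1 <| (le_add_of_nonneg_right
    (smul_nonneg k.cast_nonneg (newtonPolyhedron_subset_Ici I hy))).trans hle
  obtain ⟨d, rfl⟩ := le_iff_exists_add.1 hab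
  rw [expVec_add, add_le_add_iff_left] at hle
  exact ⟨a, d, ha, (mem_newtonPolyhedron_pow_iff hI hne).2 ⟨y, hy, hle⟩, rfl⟩

end NewtonPolyhedron

theorem stmt18 {K : Type*} [Field K] {n : ℕ} (I J : Ideal (MvPolynomial (Fin n) K))
    (hI : IsMonomialIdeal I) (hne : I ≠ ⊥) (hproper : I ≠ ⊤)
    (hJ : J = Ideal.span {f | ∃ a : Fin n →₀ ℕ,
        expVec a ∈ Set.extremePoints ℝ (newtonPolyhedron I) ∧ f = monomial a (1 : K)})
    (ℓ : ℕ) (hℓ : ℓ = maxCompactFaceDim I + 1)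
    (m : ℕ) (hm : ℓ ≤ m) :
    intCl (I ^ m) = J * intCl (I ^ (m - 1)) := by
  obtain ⟨k, rfl⟩ : ∃ k, m = k + 1 := ⟨m - 1, by omega⟩
  rw [hJ, add_tsub_cancel_right]
  apply le_antisymm
  · rw [intCl, Ideal.span_le]
    rintro _ ⟨b, hb, rfl⟩
    obtain ⟨a, d, ha, hd, rfl⟩ := exists_add_eq_of_mem_newtonPolyhedron_pow hI
      (newtonPolyhedron_nonempty hI hne) (by omega) hb
    have hmul : monomial (a + d) (1 : K) = monomial a 1 * monomial d 1 := by simp [monomial_mul]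
    rw [hmul]
    exact Ideal.mul_mem_mul (Ideal.subset_span ⟨a, ha, rfl⟩) (Ideal.subset_span ⟨d, hd, rfl⟩)
  · rw [intCl, Ideal.span_mul_span', Ideal.span_le]
    rintro _ ⟨_, ⟨a, ha, rfl⟩, _, ⟨d, hd, rfl⟩, rfl⟩
    refine Ideal.subset_span ⟨a + d, ?_, by simp [monomial_mul]⟩
    rw [expVec_add, pow_succ', newtonPolyhedron_mul hI (isMonomialIdeal_pow hI k)]
    exact Set.add_mem_add ha.1 hd
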